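/- Let p be a selective ultrafilter on ω and let u, v ∈ 𝓖^p. Then ρ_p(u+v) ≥ max{ρ_p(u), ρ_p(v)}. Moreover, if 0 < ρ_p(u) ≤ ρ_p(v), then ρ_p(u+v) > ρ_p(v). -/

import Mathlib

open Filter

attribute [local instance] Ultrafilter.add Ultrafilter.addSemigroup

/-- `sumPow u n` is the `n`-fold sum `u + ⋯ + u` of the ultrafilter `u`, for `n ≥ 1`
(with junk value `u` at `n = 0`). -/
def sumPow (u : Ultrafilter ℕ) : ℕ → Ultrafilter ℕ
  | 0 => u
  | 1 => u
  | n + 2 => sumPow u (n + 1) + u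

/-- The `u`-limit of a sequence of ultrafilters: `A ∈ ulim u v ↔ {n | A ∈ v n} ∈ u`. -/
def ulim {α : Type*} (u : Ultrafilter ℕ) (v : ℕ → Ultrafilter α) : Ultrafilter α := u.bind v

/-- A selective ultrafilter: nonprincipal, and every `f : ℕ → ℕ` is constant or injective on
some set of the ultrafilter. -/
def IsSelective (p : Ultrafilter ℕ) : Prop :=
  (∀ n : ℕ, p ≠ pure n) ∧
    ∀ f : ℕ → ℕ, ∃ A ∈ p, (∃ c, ∀ a ∈ A, f a = c) ∨ Set.InjOn f A

/-- The cumulative hierarchy `𝓖_α^p`: `𝓖_α^p` consists of the principal ultrafilters (once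
`α ≥ 1`) together with all `p`-limits of sequences lying in some earlier level. -/
noncomputable def Glevel (p : Ultrafilter ℕ) : Ordinal → Set (Ultrafilter ℕ) :=
  WellFounded.fix Ordinal.lt_wf fun α IH =>
    {u | (∃ n : ℕ, u = pure n) ∧ 1 ≤ α} ∪
      {u | ∃ β : Ordinal, ∃ h : β < α, ∃ v : ℕ → Ultrafilter ℕ,
        (∀ n, v n ∈ IH β h) ∧ u = ulim p v}

/-- The rank `ρ_p(u) = min {α | u ∈ 𝓖_{α+1}^p}`. -/
noncomputable def Grank (p u : Ultrafilter ℕ) : Ordinal :=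
  sInf {α : Ordinal | u ∈ Glevel p (α + 1)}

/-!
Along a selective `p`, a sequence `w` that is not eventually equal to its `p`-limit is discrete:
some `f` takes the value `n` almost everywhere for `w n`, for `p`-almost all `n`. If `w` and `z` are
two such sequences with the same limit, witnessed by `f` and `g`, then `f = g` almost everywhere for
that limit; otherwise, say, `f < g`, so `f` factors through `g` as `k ∘ g` with `k n < n`, and `k`
would map `p` to itself. Hence a nontrivial representation of an ultrafilter as a `p`-limit is
unique up to a `p`-null set, so the terms of `w` have smaller rank than its limit.

Since `(p-lim w) + v = p-lim (w n + v)`, the bounds on the rank of `u + v` follow by induction on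
`u`, provided `w n + v` is not eventually constant when `w` is not. This is right cancellation in
`𝓖^p`, whose base case is the strict bound by the rank of `v` for nonprincipal `u`.
-/

section UltrafilterLimits

variable {α β : Type*}

theorem exists_notMem_of_ne {u v : Ultrafilter α} (h : u ≠ v) : ∃ s ∈ u, s ∉ v := by
  by_contra! hle
  exact h (Ultrafilter.eq_of_le hle).symm

theorem eq_pure_iff_singleton_mem {u : Ultrafilter α} {a : α} : u = pure a ↔ {a} ∈ u :=
  Ultrafilter.coe_le_coe.symm.trans le_pure_iff

theorem ultrafilter_map_congr {u : Ultrafilter α} {f g : α → β} (h : f =ᶠ[u] g) :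
    u.map f = u.map g :=
  Ultrafilter.coe_injective (map_congr h)

theorem exists_set_alternating [LT α] [WellFoundedLT α] (f : α → α) :
    ∃ s : Set α, ∀ x, f x < x → (x ∈ s ↔ f x ∉ s) := by
  let s : α → Prop := WellFoundedLT.fix fun x s_below => ∀ h : f x < x, ¬s_below (f x) h
  have s_iff (x) : s x ↔ (f x < x → ¬s (f x)) := iff_of_eq (WellFoundedLT.fix_eq _ x)
  exact ⟨{x | s x}, fun x hx => (s_iff x).trans (forall_prop_of_true hx)⟩

theorem map_ne_self_of_eventually_lt [LT α] [WellFoundedLT α] {u : Ultrafilter α} {f : α → α}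
    (hf : ∀ᶠ x in u, f x < x) : u.map f ≠ u := by
  intro hmap
  obtain ⟨s, hs⟩ := exists_set_alternating f
  have mem_preimage_iff : f ⁻¹' s ∈ u ↔ s ∈ u := by rw [← Ultrafilter.mem_map, hmap]
  have mem_iff : s ∈ u ↔ (f ⁻¹' s)ᶜ ∈ u := eventually_congr (hf.mono hs)
  rw [Ultrafilter.compl_mem_iff_notMem] at mem_iff
  tauto

theorem eventually_ulim {p : Ultrafilter ℕ} {w : ℕ → Ultrafilter α} {P : α → Prop} :
    (∀ᶠ x in ulim p w, P x) ↔ ∀ᶠ n in p, ∀ᶠ x in w n, P x :=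
  Iff.rfl

theorem mem_ulim {p : Ultrafilter ℕ} {w : ℕ → Ultrafilter α} {s : Set α} :
    s ∈ ulim p w ↔ ∀ᶠ n in p, s ∈ w n :=
  Iff.rfl

theorem ulim_congr {p : Ultrafilter ℕ} {w z : ℕ → Ultrafilter α} (h : ∀ᶠ n in p, w n = z n) :
    ulim p w = ulim p z :=
  Ultrafilter.ext fun s => eventually_congr (h.mono fun _ hn => iff_of_eq (congrArg (s ∈ ·) hn))

theorem ulim_eq_of_eventually_eq {p : Ultrafilter ℕ} {w : ℕ → Ultrafilter α} {u : Ultrafilter α}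
    (h : ∀ᶠ n in p, w n = u) : ulim p w = u :=
  (ulim_congr h).trans (Ultrafilter.ext fun _ => mem_ulim.trans eventually_const)

theorem eventually_eq_pure_of_ulim_eq_pure {p : Ultrafilter ℕ} {w : ℕ → Ultrafilter α} {a : α}
    (h : ulim p w = pure a) : ∀ᶠ n in p, w n = pure a := by
  simpa only [eq_pure_iff_singleton_mem, mem_ulim] using h

theorem map_ulim (p : Ultrafilter ℕ) (w : ℕ → Ultrafilter α) (f : α → β) :
    (ulim p w).map f = ulim p fun n => (w n).map f :=
  Ultrafilter.ext fun _ => Iff.rfl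

theorem ulim_add [Add α] (p : Ultrafilter ℕ) (w : ℕ → Ultrafilter α) (v : Ultrafilter α) :
    ulim p w + v = ulim p fun n => w n + v :=
  Ultrafilter.ext fun _ => Iff.rfl

theorem pure_add_eq_map [Add α] (a : α) (v : Ultrafilter α) : pure a + v = v.map (a + ·) :=
  Ultrafilter.ext fun _ => Iff.rfl

theorem pure_add_left_injective (v : Ultrafilter ℕ) :
    Function.Injective fun n : ℕ => pure n + v := by
  refine .of_lt_imp_ne fun n m hnm h => ?_
  simp only [pure_add_eq_map] at h
  have sub_lt : ∀ᶠ x in v.map (m + ·), x - (m - n) < x := by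
    rw [Ultrafilter.coe_map, eventually_map]
    exact .of_forall fun x => by omega
  have sub_comp_add : (· - (m - n)) ∘ (m + ·) = (n + ·) := by
    funext x
    simp only [Function.comp_apply]
    omega
  refine map_ne_self_of_eventually_lt sub_lt ?_
  rw [Ultrafilter.map_map, sub_comp_add, h]

end UltrafilterLimits

section Separation

variable {α : Type*} {p : Ultrafilter ℕ} {w z : ℕ → Ultrafilter α} {f g : α → ℕ}

/-- The sequence `w` is discrete along `p`, as witnessed by `f`: for `p`-almost all `n`, the
ultrafilter `w n` concentrates on the fibre of `f` over `n`. -/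
def Separates (p : Ultrafilter ℕ) (f : α → ℕ) (w : ℕ → Ultrafilter α) : Prop :=
  ∀ᶠ n in p, ∀ᶠ x in w n, f x = n

theorem IsSelective.exists_separates (hp : IsSelective p) (hw : ∀ᶠ n in p, w n ≠ ulim p w) :
    ∃ f, Separates p f w := by
  have exists_null_set (n) : ∃ s ∉ ulim p w, w n ≠ ulim p w → s ∈ w n := by
    by_cases hn : w n = ulim p w
    · exact ⟨∅, Ultrafilter.empty_notMem, fun h => absurd hn h⟩
    · obtain ⟨s, hs, hsu⟩ := exists_notMem_of_ne hn
      exact ⟨s, hsu, fun _ => hs⟩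
  choose B hBu hBw using exists_null_set
  -- No set of `p` can carry a constant value `c` of `g`, since `B c` is null for `ulim p w`.
  let g (m : ℕ) : ℕ := sInf {n | B n ∈ w m}
  let firstIndex (x : α) : ℕ := sInf {n | x ∈ B n}
  have hBg : ∀ᶠ m in p, B (g m) ∈ w m := hw.mono fun m hm =>
    Nat.sInf_mem (s := {n | B n ∈ w m}) ⟨m, hBw m hm⟩
  have firstIndex_eq : ∀ᶠ m in p, ∀ᶠ x in w m, firstIndex x = g m := by
    filter_upwards [hBg] with m hm
    have below : ∀ᶠ x in w m, ∀ n ∈ Set.Iio (g m), x ∉ B n :=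
      (eventually_all_finite (Set.finite_Iio _)).2 fun n hn =>
        Ultrafilter.eventually_not.2 (Nat.notMem_of_lt_sInf (s := {n | B n ∈ w m}) hn)
    filter_upwards [hm, below] with x hx hxbelow
    exact le_antisymm (Nat.sInf_le hx)
      (not_lt.1 fun hlt => hxbelow _ hlt (Nat.sInf_mem (s := {n | x ∈ B n}) ⟨_, hx⟩))
  obtain ⟨A, hA, ⟨c, hc⟩ | hinj⟩ := hp.2 g
  · have hBc : B c ∈ ulim p w := by
      refine mem_ulim.2 ?_
      filter_upwards [hA, hBg] with m hmA hm
      rwa [hc m hmA] at hm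
    exact absurd hBc (hBu c)
  · refine ⟨Function.invFunOn g A ∘ firstIndex, ?_⟩
    filter_upwards [hA, firstIndex_eq] with m hmA hm
    filter_upwards [hm] with x hx
    rw [Function.comp_apply, hx, hinj.leftInvOn_invFunOn hmA]

theorem Separates.map_ulim_eq (hf : Separates p f w) : (ulim p w).map f = p := by
  rw [map_ulim, ulim_congr (z := pure)]
  · exact Ultrafilter.ext fun _ => Iff.rfl
  · exact hf.mono fun n hn => eq_pure_iff_singleton_mem.2 hn

theorem Separates.congr (hf : Separates p f w) (hfg : f =ᶠ[ulim p w] g) : Separates p g w := by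
  filter_upwards [hf, eventually_ulim.1 hfg] with n hfn hfgn
  filter_upwards [hfn, hfgn] with x hfx hfgx
  rw [← hfgx, hfx]

theorem Separates.not_eventually_lt (hf : Separates p f w) (hg : Separates p g z)
    (hwz : ulim p w = ulim p z) : ¬∀ᶠ x in ulim p z, f x < g x := by
  intro hlt
  have f_eventually_const : ∀ᶠ n in p, ∃ k < n, ∀ᶠ x in z n, f x = k := by
    filter_upwards [hg, eventually_ulim.1 hlt] with n hgn hltn
    have f_lt : Set.Iio n ∈ (z n).map f := by
      refine Ultrafilter.mem_map.2 ?_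
      filter_upwards [hgn, hltn] with x hgx hltx
      exact hltx.trans_eq hgx
    obtain ⟨k, hkn, hk⟩ := Ultrafilter.eq_pure_of_finite_mem (Set.finite_Iio n) f_lt
    exact ⟨k, hkn, eq_pure_iff_singleton_mem.1 hk⟩
  obtain ⟨k, hk⟩ := f_eventually_const.choice
  have k_comp_g : k ∘ g =ᶠ[ulim p z] f := by
    refine eventually_ulim.2 ?_
    filter_upwards [hg, hk] with n hgn hkn
    filter_upwards [hgn, hkn.2] with x hgx hfx
    rw [Function.comp_apply, hgx, hfx]
  refine map_ne_self_of_eventually_lt (hk.mono fun n hkn => hkn.1) ?_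
  calc p.map k = ((ulim p z).map g).map k := by rw [hg.map_ulim_eq]
    _ = (ulim p z).map f := (Ultrafilter.map_map ..).trans (ultrafilter_map_congr k_comp_g)
    _ = p := by rw [← hwz, hf.map_ulim_eq]

theorem Separates.eventually_eq_of_ulim_eq (hw : Separates p f w) (hz : Separates p f z)
    (hwz : ulim p w = ulim p z) : ∀ᶠ n in p, w n = z n := by
  by_contra hne
  choose! s hsw hsz using fun n (hn : w n ≠ z n) => exists_notMem_of_ne hn
  have hne := Ultrafilter.eventually_not.2 hne
  have mem_s_ulim : ∀ᶠ x in ulim p w, x ∈ s (f x) := by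
    refine eventually_ulim.2 ?_
    filter_upwards [hw, hne] with n hwn hn
    filter_upwards [hwn, hsw n hn] with x hfx hx
    rwa [hfx]
  rw [hwz, eventually_ulim] at mem_s_ulim
  obtain ⟨n, hn, hzn, hmem⟩ := (hne.and (hz.and mem_s_ulim)).exists
  refine hsz n hn ?_
  filter_upwards [hzn, hmem] with x hfx hx
  rwa [hfx] at hx

theorem IsSelective.eventually_eq_of_ulim_eq (hp : IsSelective p) (hwz : ulim p w = ulim p z)
    (hw : ∀ᶠ n in p, w n ≠ ulim p w) (hz : ∀ᶠ n in p, z n ≠ ulim p z) :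
    ∀ᶠ n in p, w n = z n := by
  obtain ⟨f, hf⟩ := hp.exists_separates hw
  obtain ⟨g, hg⟩ := hp.exists_separates hz
  have hfg : f =ᶠ[ulim p w] g := by
    have hnot_lt := Ultrafilter.eventually_not.2 (hf.not_eventually_lt hg hwz)
    have hnot_gt := Ultrafilter.eventually_not.2 (hg.not_eventually_lt hf hwz.symm)
    rw [← hwz] at hnot_lt
    filter_upwards [hnot_lt, hnot_gt] with x hlt hgt
    exact (not_lt.1 hgt).antisymm (not_lt.1 hlt)
  exact (hf.congr hfg).eventually_eq_of_ulim_eq hg hwz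

end Separation

section Hierarchy

variable {p u v : Ultrafilter ℕ} {w : ℕ → Ultrafilter ℕ} {α : Ordinal}

/-- Membership in `𝓖^p`, the closure of the principal ultrafilters under `p`-limits. As an inductive
predicate it is independent of the universe of the ordinals that index `Glevel p`. -/
inductive MemG (p : Ultrafilter ℕ) : Ultrafilter ℕ → Prop
  | pure (n : ℕ) : MemG p (pure n)
  | ulim {w : ℕ → Ultrafilter ℕ} (h : ∀ n, MemG p (w n)) : MemG p (ulim p w)

theorem mem_Glevel_iff_exists_lt :
    u ∈ Glevel p α ↔ ((∃ n : ℕ, u = pure n) ∧ 1 ≤ α) ∨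
      ∃ β < α, ∃ w : ℕ → Ultrafilter ℕ, (∀ n, w n ∈ Glevel p β) ∧ u = ulim p w := by
  unfold Glevel
  rw [WellFounded.fix_eq]
  simp only [Set.mem_union, Set.mem_ofPred_eq, exists_prop]

theorem Glevel_mono (p : Ultrafilter ℕ) : Monotone (Glevel p) := by
  intro α β hαβ u hu
  rw [mem_Glevel_iff_exists_lt] at hu ⊢
  exact hu.imp (.imp_right fun h => h.trans hαβ) fun ⟨γ, hγ, h⟩ => ⟨γ, hγ.trans_le hαβ, h⟩

theorem mem_Glevel_add_one_iff :
    u ∈ Glevel p (α + 1) ↔ (∃ n : ℕ, u = pure n) ∨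
      ∃ w : ℕ → Ultrafilter ℕ, (∀ n, w n ∈ Glevel p α) ∧ u = ulim p w := by
  rw [mem_Glevel_iff_exists_lt]
  refine or_congr (and_iff_left le_add_self) ⟨?_, fun h => ⟨α, lt_add_one α, h⟩⟩
  rintro ⟨β, hβ, w, hw, rfl⟩
  exact ⟨w, fun n => Glevel_mono p (Order.lt_add_one_iff.1 hβ) (hw n), rfl⟩

theorem pure_mem_Glevel_add_one (p : Ultrafilter ℕ) (α : Ordinal) (n : ℕ) :
    pure n ∈ Glevel p (α + 1) :=
  mem_Glevel_add_one_iff.2 (.inl ⟨n, rfl⟩)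

theorem ulim_mem_Glevel_add_one (h : ∀ᶠ n in p, w n ∈ Glevel p α) :
    ulim p w ∈ Glevel p (α + 1) := by
  classical
  obtain ⟨k, hk⟩ := h.exists
  let w' (n : ℕ) := if w n ∈ Glevel p α then w n else w k
  have hw' (n) : w' n ∈ Glevel p α := by
    unfold w'
    split_ifs with hn
    exacts [hn, hk]
  exact mem_Glevel_add_one_iff.2
    (.inr ⟨w', hw', ulim_congr (h.mono fun n hn => (if_pos hn).symm)⟩)

theorem memG_of_mem_Glevel (h : u ∈ Glevel p α) : MemG p u := by
  induction α using WellFoundedLT.induction generalizing u with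
  | ind α ih =>
    obtain ⟨⟨n, rfl⟩, -⟩ | ⟨β, hβ, w, hw, rfl⟩ := mem_Glevel_iff_exists_lt.1 h
    exacts [.pure n, .ulim fun n => ih β hβ (hw n)]

theorem MemG.exists_mem_Glevel_add_one (h : MemG p u) : ∃ α : Ordinal, u ∈ Glevel p (α + 1) := by
  induction h with
  | pure n => exact ⟨0, pure_mem_Glevel_add_one p 0 n⟩
  | ulim _ ih =>
    choose α hα using ih
    refine ⟨⨆ n, (α n + 1), ulim_mem_Glevel_add_one (.of_forall fun n => ?_)⟩
    exact Glevel_mono p (Ordinal.le_iSup (fun n => α n + 1) n) (hα n)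

theorem Grank_le_of_mem_Glevel_add_one (h : u ∈ Glevel p (α + 1)) : Grank p u ≤ α :=
  csInf_le' (s := {α : Ordinal | u ∈ Glevel p (α + 1)}) h

theorem MemG.mem_Glevel_Grank_add_one (h : MemG p u) : u ∈ Glevel p (Grank p u + 1) :=
  csInf_mem (s := {α : Ordinal | u ∈ Glevel p (α + 1)}) h.exists_mem_Glevel_add_one

theorem mem_Glevel_iff_Grank_lt : u ∈ Glevel p α ↔ MemG p u ∧ Grank p u < α := by
  refine ⟨fun h => ⟨memG_of_mem_Glevel h, ?_⟩, fun ⟨hu, hlt⟩ =>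
    Glevel_mono p (Order.add_one_le_iff.2 hlt) hu.mem_Glevel_Grank_add_one⟩
  obtain ⟨⟨n, rfl⟩, hα⟩ | ⟨β, hβ, hu⟩ := mem_Glevel_iff_exists_lt.1 h
  · exact (Grank_le_of_mem_Glevel_add_one (pure_mem_Glevel_add_one p 0 n)).trans_lt
      (Order.one_le_iff_pos.1 hα)
  · exact (Grank_le_of_mem_Glevel_add_one (mem_Glevel_add_one_iff.2 (.inr hu))).trans_lt hβ

theorem Grank_pure (p : Ultrafilter ℕ) (n : ℕ) : Grank p (pure n) = 0 :=
  nonpos_iff_eq_zero.1 (Grank_le_of_mem_Glevel_add_one (pure_mem_Glevel_add_one p 0 n))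

theorem map_mem_Glevel (f : ℕ → ℕ) (h : u ∈ Glevel p α) : u.map f ∈ Glevel p α := by
  induction α using WellFoundedLT.induction generalizing u with
  | ind α ih =>
    rw [mem_Glevel_iff_exists_lt] at h ⊢
    obtain ⟨⟨n, rfl⟩, hα⟩ | ⟨β, hβ, w, hw, rfl⟩ := h
    · exact .inl ⟨⟨f n, Ultrafilter.map_pure f n⟩, hα⟩
    · exact .inr ⟨β, hβ, _, fun n => ih β hβ (hw n), map_ulim p w f⟩

theorem MemG.map (f : ℕ → ℕ) (h : MemG p u) : MemG p (u.map f) :=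
  memG_of_mem_Glevel.{0} (map_mem_Glevel f h.mem_Glevel_Grank_add_one)

theorem MemG.Grank_map_le (f : ℕ → ℕ) (h : MemG p u) : Grank p (u.map f) ≤ Grank p u :=
  Grank_le_of_mem_Glevel_add_one (map_mem_Glevel f h.mem_Glevel_Grank_add_one)

theorem MemG.add (hu : MemG p u) (hv : MemG p v) : MemG p (u + v) := by
  induction hu with
  | pure n =>
    rw [pure_add_eq_map]
    exact hv.map _
  | ulim _ ih =>
    rw [ulim_add]
    exact .ulim ih

theorem Grank_pure_add (hv : MemG p v) (n : ℕ) : Grank p (pure n + v) = Grank p v := by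
  rw [pure_add_eq_map]
  refine (hv.Grank_map_le _).antisymm ?_
  have sub_comp_add : (· - n) ∘ (n + ·) = id := funext (Nat.add_sub_cancel_left n)
  calc Grank p v = Grank p ((v.map (n + ·)).map (· - n)) := by
        rw [Ultrafilter.map_map, sub_comp_add, Ultrafilter.map_id]
    _ ≤ Grank p (v.map (n + ·)) := (hv.map _).Grank_map_le _

end Hierarchy

section RankOfSum

variable {p u u' v : Ultrafilter ℕ} {w : ℕ → Ultrafilter ℕ}

theorem IsSelective.eventually_Grank_lt (hp : IsSelective p) (hu : MemG p (ulim p w))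
    (hw : ∀ᶠ n in p, w n ≠ ulim p w) : ∀ᶠ n in p, Grank p (w n) < Grank p (ulim p w) := by
  obtain ⟨k, hk⟩ | ⟨z, hz, hwz⟩ := mem_Glevel_add_one_iff.1 hu.mem_Glevel_Grank_add_one
  · obtain ⟨n, hne, hn⟩ := (hw.and (eventually_eq_pure_of_ulim_eq_pure hk)).exists
    exact absurd (hn.trans hk.symm) hne
  · have hz_lt (n) : Grank p (z n) < Grank p (ulim p w) := (mem_Glevel_iff_Grank_lt.1 (hz n)).2
    have hz_ne (n) : z n ≠ ulim p z := fun h => (hz_lt n).ne (by rw [h, hwz])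
    filter_upwards [hp.eventually_eq_of_ulim_eq hwz hw (.of_forall hz_ne)] with n hn
    rw [hn]
    exact hz_lt n

theorem IsSelective.eventually_Grank_le (hp : IsSelective p) (hu : MemG p (ulim p w)) :
    ∀ᶠ n in p, Grank p (w n) ≤ Grank p (ulim p w) := by
  obtain h | h := p.em fun n => w n = ulim p w
  · exact h.mono fun n hn => by rw [hn]
  · exact (hp.eventually_Grank_lt hu h).mono fun n hn => hn.le

theorem IsSelective.Grank_right_lt_add (hp : IsSelective p) (hu : MemG p u) (hv : MemG p v)
    (hu_ne : ∀ n : ℕ, u ≠ pure n) : Grank p v < Grank p (u + v) := by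
  induction hu with
  | pure n => exact absurd rfl (hu_ne n)
  | @ulim w hw ih =>
    rw [ulim_add]
    have huv : MemG p (ulim p fun n => w n + v) := .ulim fun n => (hw n).add hv
    obtain hpure | hnonpure := p.em fun n => ∃ m : ℕ, w n = pure m
    · obtain ⟨m, hm⟩ := hpure.choice
      obtain hconst | hnonconst := p.em fun n => w n + v = ulim p fun k => w k + v
      · obtain ⟨k, hk, hkm⟩ := (hconst.and hm).exists
        refine absurd (ulim_eq_of_eventually_eq ?_) (hu_ne (m k))
        filter_upwards [hm, hconst] with n hn hconst_n
        have hmn : m n = m k := pure_add_left_injective v (by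
          simp only [← hn, ← hkm, hconst_n, hk])
        rw [hn, hmn]
      · obtain ⟨k, hk, hkm⟩ := ((hp.eventually_Grank_lt huv hnonconst).and hm).exists
        rwa [hkm, Grank_pure_add hv] at hk
    · obtain ⟨k, hle, hk⟩ := ((hp.eventually_Grank_le huv).and hnonpure).exists
      exact (ih k (not_exists.1 hk)).trans_le hle

theorem IsSelective.Grank_right_le_add (hp : IsSelective p) (hu : MemG p u) (hv : MemG p v) :
    Grank p v ≤ Grank p (u + v) := by
  by_cases h : ∃ n : ℕ, u = pure n
  · obtain ⟨n, rfl⟩ := h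
    rw [Grank_pure_add hv]
  · exact (hp.Grank_right_lt_add hu hv (not_exists.1 h)).le

theorem IsSelective.eq_pure_of_add_eq_pure_add (hp : IsSelective p) (hu : MemG p u)
    (hv : MemG p v) {n : ℕ} (h : u + v = pure n + v) : u = pure n := by
  by_cases hpure : ∃ m : ℕ, u = pure m
  · obtain ⟨m, rfl⟩ := hpure
    rw [pure_add_left_injective v h]
  · have hlt := hp.Grank_right_lt_add.{0} hu hv (not_exists.1 hpure)
    rw [h, Grank_pure_add hv] at hlt
    exact absurd hlt (lt_irrefl _)

theorem IsSelective.add_right_cancel (hp : IsSelective p) (hu : MemG p u) (hu' : MemG p u')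
    (hv : MemG p v) (h : u + v = u' + v) : u = u' := by
  induction hu generalizing u' with
  | pure n => exact (hp.eq_pure_of_add_eq_pure_add hu' hv h.symm).symm
  | @ulim w hw ih =>
    obtain hconst | hnonconst := p.em fun n => w n + v = ulim p w + v
    · exact ulim_eq_of_eventually_eq (hconst.mono fun n hn => ih n hu' (hn.trans h))
    induction hu' with
    | pure n => exact hp.eq_pure_of_add_eq_pure_add (.ulim hw) hv h
    | @ulim w' hw' ih' =>
      obtain hconst' | hnonconst' := p.em fun n => w' n + v = ulim p w' + v
      · refine (ulim_eq_of_eventually_eq (hconst'.mono fun n hn => ?_)).symm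
        exact (ih' n (h.trans hn.symm)).symm
      · rw [ulim_add] at hnonconst hnonconst'
        rw [ulim_add, ulim_add] at h
        refine ulim_congr ((hp.eventually_eq_of_ulim_eq h hnonconst hnonconst').mono ?_)
        exact fun n hn => ih n (hw' n) hn

theorem IsSelective.Grank_left_le_add (hp : IsSelective p) (hu : MemG p u) (hv : MemG p v) :
    Grank p u ≤ Grank p (u + v) := by
  induction hu with
  | pure n => exact (Grank_pure p n).trans_le zero_le
  | @ulim w hw ih =>
    obtain hconst | hnonconst := p.em fun n => w n = ulim p w
    · obtain ⟨k, hk⟩ := hconst.exists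
      simpa only [hk] using ih k
    have hnonconst_add : ∀ᶠ n in p, w n + v ≠ ulim p fun k => w k + v := by
      rw [← ulim_add]
      exact hnonconst.mono fun n hn h => hn (hp.add_right_cancel (hw n) (.ulim hw) hv h)
    rw [ulim_add]
    refine Grank_le_of_mem_Glevel_add_one (ulim_mem_Glevel_add_one ?_)
    filter_upwards [hp.eventually_Grank_lt (.ulim fun n => (hw n).add hv) hnonconst_add] with n hn
    exact mem_Glevel_iff_Grank_lt.2 ⟨hw n, (ih n).trans_lt hn⟩

end RankOfSum

/-- If `p` is selective and `u, v ∈ 𝓖^p`, then `ρ_p(u + v) ≥ max (ρ_p u) (ρ_p v)`; moreover if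
`0 < ρ_p u ≤ ρ_p v` then `ρ_p(u + v) > ρ_p v`. -/
theorem statement17 (p : Ultrafilter ℕ) (hp : IsSelective p) (u v : Ultrafilter ℕ)
    (hu : ∃ α, u ∈ Glevel p α) (hv : ∃ α, v ∈ Glevel p α) :
    max (Grank p u) (Grank p v) ≤ Grank p (u + v) ∧
      (0 < Grank p u → Grank p u ≤ Grank p v → Grank p v < Grank p (u + v)) := by
  replace hu : MemG p u := memG_of_mem_Glevel hu.choose_spec
  replace hv : MemG p v := memG_of_mem_Glevel hv.choose_spec
  refine ⟨max_le (hp.Grank_left_le_add hu hv) (hp.Grank_right_le_add hu hv), fun hpos _ => ?_⟩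
  refine hp.Grank_right_lt_add hu hv ?_
  rintro n rfl
  exact hpos.ne' (Grank_pure p n)
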